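/- Let n ≥ 1, m ≤ 0, 1 ≥ ρ ≥ δ ≥ 0 with δ < 1, and let a ∈ 𝒮(ℝⁿ) with ‖a‖_{L²(ℝⁿ)} = 1. For every σ ∈ S^m_{ρ,δ}(ℝⁿ) there exists τ ∈ S^m_{ρ,δ}(ℝⁿ) such that for all f ∈ 𝒮(ℝⁿ) and x ∈ ℝⁿ, Op^{Wick,a}(σ)f(x) = ∫_{ℝⁿ} e^{2πi x·ξ} τ(x,ξ) 𝓕f(ξ) dξ; that is, the Wick quantization of a symbol of order m ≤ 0 is a Kohn–Nirenberg pseudodifferential operator of order m. (Euclidean analogue of Lemma 3.5(1)/Lemma 5.4(1).) -/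

import Mathlib

open MeasureTheory Complex

noncomputable section

/-- `e^{2πit}`. -/
def expi (t : ℝ) : ℂ := Complex.exp (2 * (Real.pi : ℂ) * Complex.I * (t : ℂ))

/-- Dot product on `ℝⁿ`. -/
def dotp {n : ℕ} (x y : Fin n → ℝ) : ℝ := ∑ i, x i * y i

/-- Euclidean Fourier transform `𝓕f(ξ) = ∫ f(y) e^{-2πi y·ξ} dy`. -/
def FT {n : ℕ} (f : (Fin n → ℝ) → ℂ) (ξ : Fin n → ℝ) : ℂ :=
  ∫ y, f y * expi (-(dotp y ξ))

/-- Bargmann-type transform `B_a[f](x,ξ) = ∫ f(y) a(y-x) e^{-2πi y·ξ} dy`. -/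
def Barg {n : ℕ} (a f : (Fin n → ℝ) → ℂ) (x ξ : Fin n → ℝ) : ℂ :=
  ∫ y, f y * a (y - x) * expi (-(dotp y ξ))

/-- Wick quantization with window `a`. -/
def WickOp {n : ℕ} (a : (Fin n → ℝ) → ℂ) (σ : (Fin n → ℝ) → (Fin n → ℝ) → ℂ)
    (f : (Fin n → ℝ) → ℂ) (y : Fin n → ℝ) : ℂ :=
  ∫ p : (Fin n → ℝ) × (Fin n → ℝ),
    σ p.1 p.2 * Barg a f p.1 p.2 * (starRingEnd ℂ) (a (y - p.1)) * expi (dotp y p.2)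

/-- Kohn–Nirenberg quantization. -/
def OpKN {n : ℕ} (σ : (Fin n → ℝ) → (Fin n → ℝ) → ℂ) (f : (Fin n → ℝ) → ℂ)
    (x : Fin n → ℝ) : ℂ :=
  ∫ ξ, expi (dotp x ξ) * σ x ξ * FT f ξ

/-- Partial derivative in the `i`-th coordinate direction. -/
def pd {n : ℕ} (i : Fin n) (F : (Fin n → ℝ) → ℂ) : (Fin n → ℝ) → ℂ :=
  fun x => fderiv ℝ F x (Pi.single i 1)

/-- Multi-index derivative `∂^α`. -/
def md {n : ℕ} (α : Fin n → ℕ) (F : (Fin n → ℝ) → ℂ) : (Fin n → ℝ) → ℂ :=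
  (((List.finRange n).map fun i => (pd i)^[α i]).foldr (· ∘ ·) id) F

/-- Mixed derivative `∂_x^β ∂_ξ^α σ`. -/
def mixedD {n : ℕ} (β α : Fin n → ℕ) (σ : (Fin n → ℝ) → (Fin n → ℝ) → ℂ) :
    (Fin n → ℝ) → (Fin n → ℝ) → ℂ :=
  fun x ξ => md β (fun x' => md α (fun ξ' => σ x' ξ') ξ) x

/-- The weight `1 + |ξ|²` (Euclidean norm squared). -/
def wt {n : ℕ} (ξ : Fin n → ℝ) : ℝ := 1 + ∑ i, ξ i ^ 2

/-- Length `|α|` of a multi-index, as a real number. -/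
def mOrd {n : ℕ} (α : Fin n → ℕ) : ℝ := ∑ i, (α i : ℝ)

/-- The Hörmander class `S^m_{ρ,δ}(ℝⁿ)`. -/
def SymbolClass {n : ℕ} (m ρ δ : ℝ) (σ : (Fin n → ℝ) → (Fin n → ℝ) → ℂ) : Prop :=
  (ContDiff ℝ (⊤ : ℕ∞) fun p : (Fin n → ℝ) × (Fin n → ℝ) => σ p.1 p.2) ∧
  ∀ α β : Fin n → ℕ, ∃ C > 0, ∀ x ξ,
    ‖mixedD β α σ x ξ‖ ≤ C * wt ξ ^ ((m - ρ * mOrd α + δ * mOrd β) / 2)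

/-- The seminorm `‖σ‖_{S^m_{ρ,δ},α,β}`. -/
def hSem {n : ℕ} (m ρ δ : ℝ) (α β : Fin n → ℕ)
    (σ : (Fin n → ℝ) → (Fin n → ℝ) → ℂ) : ℝ :=
  ⨆ p : (Fin n → ℝ) × (Fin n → ℝ),
    wt p.2 ^ (-(m - ρ * mOrd α + δ * mOrd β) / 2) * ‖mixedD β α σ p.1 p.2‖

/-- Squared Sobolev norm `‖f‖²_{H^s}`. -/
def sobSq {n : ℕ} (s : ℝ) (f : (Fin n → ℝ) → ℂ) : ℝ :=
  ∫ ξ, wt ξ ^ s * ‖FT f ξ‖ ^ 2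

end

/-!
Fourier inversion expresses `B_a[f](x, ξ)` as an integral of `𝓕f(η)` against a modulated copy of
`𝓕a(ξ - η)`. Inserting this into the definition of the Wick operator and exchanging the integrals
shows that its Kohn–Nirenberg symbol is the convolution, on phase space `ℝⁿ × ℝⁿ`, of `σ` with the
kernel `(x, ξ) ↦ e^{-2πi x·ξ} 𝓕a(-ξ) conj(a(x))`. The kernel decays rapidly, whereas by Peetre's
inequality translating the weight `(1 + |ξ|²)^s` by `t` costs only a polynomial factor in `t`.
Convolution with the kernel therefore preserves every bound by such a weight, and since all
derivatives of the convolution can be put on `σ`, it preserves the symbol classes.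
-/

open Asymptotics Function
open scoped ContDiff Convolution

noncomputable section

/-! ### Families of iterated directional derivatives -/

section DerivFamily

variable {ι V F : Type*} [DecidableEq ι] [NormedAddCommGroup V] [NormedSpace ℝ V]
  [NormedAddCommGroup F] [NormedSpace ℝ F]

/-- `H γ` is the derivative of `H 0` of multi-order `γ` along the vectors `v i`. This is the
coordinate counterpart of `HasFTaylorSeriesUpTo ∞`: it asks how consecutive members are related
rather than how each one is obtained from `H 0`, so that no order of differentiation is chosen. -/
structure IsDerivFamily (v : ι → V) (H : (ι → ℕ) → V → F) : Prop where
  differentiable (γ : ι → ℕ) : Differentiable ℝ (H γ)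
  fderiv_apply (γ : ι → ℕ) (i : ι) (p : V) :
    fderiv ℝ (H γ) p (v i) = H (γ + Pi.single i 1) p

theorem IsDerivFamily.contDiff [Finite ι] {b : Module.Basis ι ℝ V} {H : (ι → ℕ) → V → F}
    (hH : IsDerivFamily b H) (γ : ι → ℕ) : ContDiff ℝ ∞ (H γ) := by
  cases nonempty_fintype ι
  have : FiniteDimensional ℝ V := b.finiteDimensional_of_finite
  refine contDiff_infty.2 fun N => ?_
  induction N generalizing γ with
  | zero => exact contDiff_zero.2 (hH.differentiable γ).continuous
  | succ N ih =>
    rw [Nat.cast_succ]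
    refine contDiff_succ_iff_fderiv_apply.2 ⟨hH.differentiable γ, by simp, fun v => ?_⟩
    have expand : (fun p => fderiv ℝ (H γ) p v) =
        fun p => ∑ i, b.repr v i • H (γ + Pi.single i 1) p := by
      funext p
      conv_lhs => rw [← b.sum_repr v]
      simp only [map_sum, map_smul, hH.fderiv_apply]
    rw [expand]
    exact ContDiff.sum fun i _ => (ih _).const_smul _

/-- The derivative in the direction `v`, as a self-map of the smooth functions: this puts the
directional derivatives in a monoid, where commuting families have products of powers. -/
def dirDeriv (v : V) : Function.End {G : V → F // ContDiff ℝ ∞ G} := fun G =>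
  ⟨fun p => fderiv ℝ G.1 p v, (G.2.fderiv_right (m := ∞) (by simp)).clm_apply contDiff_const⟩

theorem fderiv_fderiv_apply_comm {G : V → F} (hG : ContDiff ℝ 2 G) (p v w : V) :
    fderiv ℝ (fun q => fderiv ℝ G q v) p w = fderiv ℝ (fun q => fderiv ℝ G q w) p v := by
  have hG' : DifferentiableAt ℝ (fderiv ℝ G) p :=
    (hG.fderiv_right one_add_one_eq_two.le).differentiable one_ne_zero p
  have hsymm : IsSymmSndFDerivAt ℝ G p := hG.contDiffAt.isSymmSndFDerivAt (by simp)
  rw [fderiv_clm_apply hG' (differentiableAt_const v),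
    fderiv_clm_apply hG' (differentiableAt_const w)]
  simpa using hsymm w v

theorem commute_dirDeriv (v w : V) :
    Commute (dirDeriv v : Function.End {G : V → F // ContDiff ℝ ∞ G}) (dirDeriv w) :=
  funext fun G => Subtype.ext <| funext fun p =>
    fderiv_fderiv_apply_comm (contDiff_infty.1 G.2 2) p w v

/-- The product of the powers `dirDeriv (v i) ^ γ i`, as a homomorphism in `γ`. -/
def iteratedDirDeriv [Fintype ι] (v : ι → V) :
    (ι → Multiplicative ℕ) →* Function.End {G : V → F // ContDiff ℝ ∞ G} :=
  MonoidHom.noncommPiCoprod (fun i => powersHom _ (dirDeriv (v i))) fun i j _ k l => by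
    simpa only [powersHom_apply] using (commute_dirDeriv (v i) (v j)).pow_pow k.toAdd l.toAdd

theorem iteratedDirDeriv_mulSingle [Fintype ι] (v : ι → V) (i : ι) :
    iteratedDirDeriv (F := F) v (Pi.mulSingle i (Multiplicative.ofAdd 1)) = dirDeriv (v i) :=
  (MonoidHom.noncommPiCoprod_mulSingle _ i _).trans (by simp)

theorem exists_isDerivFamily_of_contDiff [Finite ι] (v : ι → V) {G : V → F}
    (hG : ContDiff ℝ ∞ G) : ∃ H : (ι → ℕ) → V → F, IsDerivFamily v H ∧ H 0 = G := by
  cases nonempty_fintype ι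
  let D (γ : ι → ℕ) := iteratedDirDeriv (F := F) v (fun i => Multiplicative.ofAdd (γ i))
  have D_add_single (γ : ι → ℕ) (i : ι) : D (γ + Pi.single i 1) = dirDeriv (v i) * D γ := by
    rw [← iteratedDirDeriv_mulSingle, ← map_mul]
    congr 1
    funext j
    obtain rfl | hj := eq_or_ne j i
    · simp [add_comm]
    · simp [hj]
  refine ⟨fun γ => (D γ ⟨G, hG⟩).1, ⟨fun γ => ?_, fun γ i p => ?_⟩, ?_⟩
  · exact (D γ ⟨G, hG⟩).2.differentiable (by simp)
  · rw [D_add_single]; rfl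
  · have D_zero : D 0 = 1 := map_one _
    exact congrArg (fun d => (d ⟨G, hG⟩).1) D_zero

variable {κ W : Type*} [DecidableEq κ] [NormedAddCommGroup W] [NormedSpace ℝ W]
  {b : Module.Basis ι ℝ V} {c : Module.Basis κ ℝ W} {H : (ι ⊕ κ → ℕ) → V × W → F}

theorem IsDerivFamily.slice_fst (hH : IsDerivFamily (b.prod c) H) (α : κ → ℕ) (y : W) :
    IsDerivFamily b fun β x => H (Sum.elim β α) (x, y) where
  differentiable β := (hH.differentiable _).comp (by fun_prop)
  fderiv_apply β i x := by
    have elim_add : Sum.elim (β + Pi.single i 1) α = Sum.elim β α + Pi.single (Sum.inl i) 1 := by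
      ext (j | j) <;> simp [Pi.single_apply]
    have chain : HasFDerivAt (fun x => H (Sum.elim β α) (x, y))
        (fderiv ℝ (H (Sum.elim β α)) (x, y) ∘SL .inl ℝ V W) x :=
      (hH.differentiable _ _).hasFDerivAt.comp (f := fun x => (x, y)) x
        (hasFDerivAt_prodMk_left x y)
    rw [elim_add, ← hH.fderiv_apply, chain.fderiv]
    simp [Module.Basis.prod_apply]

theorem IsDerivFamily.slice_snd (hH : IsDerivFamily (b.prod c) H) (β : ι → ℕ) (x : V) :
    IsDerivFamily c fun α y => H (Sum.elim β α) (x, y) where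
  differentiable α := (hH.differentiable _).comp (by fun_prop)
  fderiv_apply α i y := by
    have elim_add : Sum.elim β (α + Pi.single i 1) = Sum.elim β α + Pi.single (Sum.inr i) 1 := by
      ext (j | j) <;> simp [Pi.single_apply]
    have chain : HasFDerivAt (fun y => H (Sum.elim β α) (x, y))
        (fderiv ℝ (H (Sum.elim β α)) (x, y) ∘SL .inr ℝ V W) y :=
      (hH.differentiable _ _).hasFDerivAt.comp (f := fun y => (x, y)) y
        (hasFDerivAt_prodMk_right x y)
    rw [elim_add, ← hH.fderiv_apply, chain.fderiv]
    simp [Module.Basis.prod_apply]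

end DerivFamily

variable {n : ℕ}

theorem IsDerivFamily.pd_iterate {H : (Fin n → ℕ) → (Fin n → ℝ) → ℂ}
    (hH : IsDerivFamily (Pi.basisFun ℝ (Fin n)) H) (i : Fin n) (k : ℕ) (γ : Fin n → ℕ) :
    (pd i)^[k] (H γ) = H (Pi.single i k + γ) := by
  induction k with
  | zero => simp
  | succ k ih =>
    funext x
    have := hH.fderiv_apply (Pi.single i k + γ) i x
    rw [Pi.basisFun_apply] at this
    rw [iterate_succ_apply', ih, pd, this, Pi.single_add, add_right_comm]

theorem IsDerivFamily.md_eq {H : (Fin n → ℕ) → (Fin n → ℝ) → ℂ}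
    (hH : IsDerivFamily (Pi.basisFun ℝ (Fin n)) H) (α : Fin n → ℕ) : md α (H 0) = H α := by
  have foldr_eq (l : List (Fin n)) : ((l.map fun i => (pd i)^[α i]).foldr (· ∘ ·) id) (H 0) =
      H (l.map fun i => Pi.single i (α i)).sum := by
    induction l with
    | nil => rfl
    | cons i l ih => simp only [List.map_cons, List.foldr_cons, comp_apply, List.sum_cons, ih,
        hH.pd_iterate]
  rw [md, foldr_eq, ← List.sum_toFinset _ (List.nodup_finRange n)]
  simp [Finset.univ_sum_single]

/-- The coordinate basis `(∂_{x₁}, …, ∂_{xₙ}, ∂_{ξ₁}, …, ∂_{ξₙ})` of phase space `ℝⁿ × ℝⁿ`. -/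
abbrev phaseBasis (n : ℕ) :
    Module.Basis (Fin n ⊕ Fin n) ℝ ((Fin n → ℝ) × (Fin n → ℝ)) :=
  (Pi.basisFun ℝ (Fin n)).prod (Pi.basisFun ℝ (Fin n))

theorem IsDerivFamily.mixedD_eq {H : (Fin n ⊕ Fin n → ℕ) → (Fin n → ℝ) × (Fin n → ℝ) → ℂ}
    (hH : IsDerivFamily (phaseBasis n) H) (β α : Fin n → ℕ) (x ξ : Fin n → ℝ) :
    mixedD β α (curry (H 0)) x ξ = H (Sum.elim β α) (x, ξ) := by
  have md_snd (x' : Fin n → ℝ) :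
      md α (fun ξ' => H 0 (x', ξ')) = fun ξ' => H (Sum.elim 0 α) (x', ξ') := by
    simpa only [Sum.elim_zero_zero] using (hH.slice_snd 0 x').md_eq α
  simp only [mixedD, curry_apply, md_snd, (hH.slice_fst α ξ).md_eq β]

/-! ### Convolution against moderate weights -/

section ModerateConvolution

variable {V E E' F : Type*} [NormedAddCommGroup V] [NormedAddCommGroup E] [NormedSpace ℝ E]
  [NormedAddCommGroup E'] [NormedSpace ℝ E'] [NormedAddCommGroup F] [NormedSpace ℝ F]

/-- The weight `w` is `v`-moderate: translating it by `t` costs at most a factor `v t`. Stating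
this through norms spares sign conditions on `v` and `w`. -/
def IsModerate (v w : V → ℝ) : Prop :=
  ∀ p t, ‖w (p - t)‖ ≤ ‖v t‖ * ‖w p‖

namespace IsModerate

variable {v w : V → ℝ} {k : V → E} {G : V → E'}

theorem norm_convolution_integrand_le (hw : IsModerate v w) {C : ℝ} (hC : 0 ≤ C)
    (hG : IsBigOWith C ⊤ G w) (L : E →L[ℝ] E' →L[ℝ] F) (p t : V) :
    ‖L (k t) (G (p - t))‖ ≤ ‖L‖ * C * ‖w p‖ * ‖v t • k t‖ := by
  calc ‖L (k t) (G (p - t))‖ ≤ ‖L‖ * ‖k t‖ * ‖G (p - t)‖ := L.le_opNorm₂ _ _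
    _ ≤ ‖L‖ * ‖k t‖ * (C * (‖v t‖ * ‖w p‖)) := by
        gcongr
        exact (isBigOWith_top.1 hG _).trans (by gcongr; exact hw p t)
    _ = ‖L‖ * C * ‖w p‖ * ‖v t • k t‖ := by rw [norm_smul]; ring

variable [MeasurableSpace V] {μ : Measure V}

theorem isBigO_convolution (hw : IsModerate v w) (hvk : Integrable (fun t => v t • k t) μ)
    (hG : G =O[⊤] w) (L : E →L[ℝ] E' →L[ℝ] F) : (k ⋆[L, μ] G) =O[⊤] w := by
  obtain ⟨C, hC, hG⟩ := hG.exists_nonneg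
  refine isBigO_top.2 ⟨‖L‖ * C * ∫ t, ‖v t • k t‖ ∂μ, fun p => ?_⟩
  calc ‖(k ⋆[L, μ] G) p‖ ≤ ∫ t, ‖L‖ * C * ‖w p‖ * ‖v t • k t‖ ∂μ :=
        norm_integral_le_of_norm_le (hvk.norm.const_mul _)
          (.of_forall fun t => hw.norm_convolution_integrand_le hC hG L p t)
    _ = ‖L‖ * C * (∫ t, ‖v t • k t‖ ∂μ) * ‖w p‖ := by rw [integral_const_mul]; ring

variable [BorelSpace V] [SecondCountableTopology V]

theorem convolutionExists (hw : IsModerate v w) (hk : AEStronglyMeasurable k μ)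
    (hvk : Integrable (fun t => v t • k t) μ) (hGc : Continuous G) (hG : G =O[⊤] w)
    (L : E →L[ℝ] E' →L[ℝ] F) : ConvolutionExists k G L μ := by
  intro p
  obtain ⟨C, hC, hG⟩ := hG.exists_nonneg
  have hGp : Continuous fun t => G (p - t) := by fun_prop
  exact (hvk.norm.const_mul _).mono' (L.aestronglyMeasurable_comp₂ hk hGp.aestronglyMeasurable)
    (.of_forall fun t => hw.norm_convolution_integrand_le hC hG L p t)

variable [NormedSpace ℝ V]

set_option maxSynthPendingDepth 3 in
theorem hasFDerivAt_convolution (hw : IsModerate v w) (hwc : Continuous w)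
    (hk : AEStronglyMeasurable k μ) (hvk : Integrable (fun t => v t • k t) μ)
    (hGd : ContDiff ℝ 1 G) (hG : G =O[⊤] w) (hG' : fderiv ℝ G =O[⊤] w)
    (L : E →L[ℝ] E' →L[ℝ] F) (p : V) :
    HasFDerivAt (k ⋆[L, μ] G) ((k ⋆[L.precompR V, μ] fderiv ℝ G) p) p := by
  obtain ⟨C, hC, hG'C⟩ := hG'.exists_nonneg
  have near : {q | ‖w q‖ < ‖w p‖ + 1} ∈ nhds p :=
    (isOpen_lt (by fun_prop) continuous_const).mem_nhds (lt_add_one ‖w p‖)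
  have meas (q : V) : AEStronglyMeasurable (fun t => L (k t) (G (q - t))) μ :=
    (hw.convolutionExists hk hvk hGd.continuous hG L q).aestronglyMeasurable
  refine hasFDerivAt_integral_of_dominated_of_fderiv_le near (.of_forall meas)
    (hw.convolutionExists hk hvk hGd.continuous hG L p)
    (F' := fun q t => L.precompR V (k t) (fderiv ℝ G (q - t)))
    (hw.convolutionExists hk hvk (hGd.continuous_fderiv one_ne_zero) hG'
      (L.precompR V) p).aestronglyMeasurable
    (bound := fun t => ‖L.precompR V‖ * C * (‖w p‖ + 1) * ‖v t • k t‖)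
    (.of_forall fun t q hq => ?_) (hvk.norm.const_mul _) (.of_forall fun t q _ => ?_)
  · refine (hw.norm_convolution_integrand_le hC hG'C (L.precompR V) q t).trans ?_
    gcongr
    exact le_of_lt hq
  · have hGq : HasFDerivAt (fun q => G (q - t)) (fderiv ℝ G (q - t)) q :=
      ((hGd.differentiable one_ne_zero _).hasFDerivAt.comp q
        ((hasFDerivAt_id q).sub_const t)).congr_fderiv (by simp)
    exact (L (k t)).hasFDerivAt.comp q hGq

theorem fderiv_convolution_apply (hw : IsModerate v w) (hwc : Continuous w)
    (hk : AEStronglyMeasurable k μ) (hvk : Integrable (fun t => v t • k t) μ)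
    (hGd : ContDiff ℝ 1 G) (hG : G =O[⊤] w) (hG' : fderiv ℝ G =O[⊤] w)
    (L : E →L[ℝ] E' →L[ℝ] F) (p u : V) :
    fderiv ℝ (k ⋆[L, μ] G) p u = (k ⋆[L, μ] fun q => fderiv ℝ G q u) p := by
  rw [(hw.hasFDerivAt_convolution hwc hk hvk hGd hG hG' L p).fderiv, convolution_def,
    ContinuousLinearMap.integral_apply
      (hw.convolutionExists hk hvk (hGd.continuous_fderiv one_ne_zero) hG' (L.precompR V) p)]
  rfl

end IsModerate

theorem IsDerivFamily.isBigO_fderiv {ι : Type*} [DecidableEq ι] [Finite ι] [NormedSpace ℝ V]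
    {b : Module.Basis ι ℝ V} {H : (ι → ℕ) → V → F} (hH : IsDerivFamily b H) {w : V → ℝ}
    {γ : ι → ℕ} (h : ∀ i, H (γ + Pi.single i 1) =O[⊤] w) : fderiv ℝ (H γ) =O[⊤] w := by
  cases nonempty_fintype ι
  obtain ⟨C, -, hC⟩ := b.exists_opNorm_le (F := F)
  have coords : (fun p i => fderiv ℝ (H γ) p (b i)) =O[⊤] w :=
    isBigO_pi.2 fun i => by simpa only [hH.fderiv_apply] using h i
  refine IsBigO.trans (isBigO_top.2 ⟨C, fun p => ?_⟩) coords
  exact hC (norm_nonneg _) (norm_le_pi_norm fun i => fderiv ℝ (H γ) p (b i))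

end ModerateConvolution

theorem integrable_mul_comp_sub {X G 𝕜 : Type*} [MeasurableSpace X] [MeasurableSpace G]
    [AddGroup G] [MeasurableAdd₂ G] [MeasurableNeg G] [NormedRing 𝕜] {μ : Measure X}
    {ν : Measure G} [SFinite μ] [SFinite ν] [ν.IsAddLeftInvariant] [ν.IsNegInvariant]
    {g : X → 𝕜} {h : G → 𝕜} (hg : Integrable g μ) (hh : Integrable h ν)
    {u : X → G} (hu : Measurable u) :
    Integrable (fun q : X × G => g q.1 * h (u q.1 - q.2)) (μ.prod ν) := by
  have shear : MeasurePreserving (fun q : X × G => (q.1, u q.1 - q.2)) (μ.prod ν) (μ.prod ν) :=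
    (MeasurePreserving.id μ).skew_product (g := fun x t => u x - t)
      (by fun_prop) (.of_forall fun x => (Measure.measurePreserving_sub_left ν (u x)).map_eq)
  exact shear.integrable_comp_of_integrable (hg.mul_prod hh)

/-! ### The weights of the symbol classes -/

theorem one_le_wt (ξ : Fin n → ℝ) : 1 ≤ wt ξ :=
  le_add_of_nonneg_right (Finset.sum_nonneg fun i _ => sq_nonneg (ξ i))

theorem wt_pos (ξ : Fin n → ℝ) : 0 < wt ξ :=
  one_pos.trans_le (one_le_wt ξ)

theorem wt_sub_comm (ξ η : Fin n → ℝ) : wt (ξ - η) = wt (η - ξ) := by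
  simp only [wt, Pi.sub_apply, sub_sq_comm]

theorem wt_sub_le (ξ η : Fin n → ℝ) : wt (ξ - η) ≤ 2 * wt η * wt ξ := by
  have sum_le : ∑ i, (ξ - η) i ^ 2 ≤ 2 * ∑ i, ξ i ^ 2 + 2 * ∑ i, η i ^ 2 := by
    rw [Finset.mul_sum, Finset.mul_sum, ← Finset.sum_add_distrib]
    exact Finset.sum_le_sum fun i _ => by
      rw [Pi.sub_apply]; nlinarith [sq_nonneg (ξ i + η i)]
  have hξ : 0 ≤ ∑ i, ξ i ^ 2 := Finset.sum_nonneg fun i _ => sq_nonneg (ξ i)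
  have hη : 0 ≤ ∑ i, η i ^ 2 := Finset.sum_nonneg fun i _ => sq_nonneg (η i)
  simp only [wt]
  nlinarith [mul_nonneg hξ hη]

theorem rpow_le_rpow_abs_mul_rpow {x y c : ℝ} (hx : 0 < x) (hy : 0 < y) (hc : 0 < c)
    (hxy : x ≤ c * y) (hyx : y ≤ c * x) (s : ℝ) : x ^ s ≤ c ^ |s| * y ^ s := by
  obtain hs | hs := le_total 0 s
  · rw [abs_of_nonneg hs, ← Real.mul_rpow hc.le hy.le]
    exact Real.rpow_le_rpow hx.le hxy hs
  · rw [abs_of_nonpos hs, Real.rpow_neg hc.le, ← div_eq_inv_mul, le_div_iff₀' (by positivity),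
      ← Real.mul_rpow hc.le hx.le]
    exact Real.rpow_le_rpow_of_nonpos hy hyx hs

/-- The weight `(1 + |ξ|²)^s`, as a function of `(x, ξ)`. -/
def phaseWeight (s : ℝ) (p : (Fin n → ℝ) × (Fin n → ℝ)) : ℝ := wt p.2 ^ s

theorem phaseWeight_pos (s : ℝ) (p : (Fin n → ℝ) × (Fin n → ℝ)) : 0 < phaseWeight s p :=
  Real.rpow_pos_of_pos (wt_pos p.2) s

theorem norm_phaseWeight (s : ℝ) (p : (Fin n → ℝ) × (Fin n → ℝ)) :
    ‖phaseWeight s p‖ = phaseWeight s p :=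
  Real.norm_of_nonneg (phaseWeight_pos s p).le

theorem continuous_phaseWeight (s : ℝ) : Continuous (phaseWeight (n := n) s) := by
  have hwt : Continuous fun p : (Fin n → ℝ) × (Fin n → ℝ) => wt p.2 := by unfold wt; fun_prop
  exact hwt.rpow_const fun p => .inl (wt_pos p.2).ne'

theorem phaseWeight_isBigO {s s' : ℝ} (h : s ≤ s') :
    phaseWeight (n := n) s =O[⊤] phaseWeight s' :=
  isBigO_top.2 ⟨1, fun p => by
    rw [norm_phaseWeight, norm_phaseWeight, one_mul]
    exact Real.rpow_le_rpow_of_exponent_le (one_le_wt p.2) h⟩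

/-- The factor `2^|s| (1 + |ξ|²)^|s|` of Peetre's inequality for the weight `phaseWeight s`. -/
def peetreWeight (s : ℝ) (t : (Fin n → ℝ) × (Fin n → ℝ)) : ℝ := 2 ^ |s| * phaseWeight |s| t

theorem isModerate_phaseWeight (s : ℝ) :
    IsModerate (peetreWeight s) (phaseWeight (n := n) s) := by
  intro p t
  have le_sub : wt p.2 ≤ 2 * wt t.2 * wt (p.2 - t.2) := by
    simpa [wt_sub_comm t.2, mul_right_comm] using wt_sub_le t.2 (t.2 - p.2)
  have peetre := rpow_le_rpow_abs_mul_rpow (wt_pos _) (wt_pos _)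
    (mul_pos two_pos (wt_pos t.2)) (wt_sub_le p.2 t.2) le_sub s
  rw [Real.mul_rpow zero_le_two (wt_pos t.2).le] at peetre
  simpa only [peetreWeight, norm_mul, norm_phaseWeight,
    Real.norm_of_nonneg (Real.rpow_nonneg zero_le_two |s|)]

/-! ### Stability of the symbol classes under convolution -/

theorem IsDerivFamily.symbolClass_iff
    {H : (Fin n ⊕ Fin n → ℕ) → (Fin n → ℝ) × (Fin n → ℝ) → ℂ}
    (hH : IsDerivFamily (phaseBasis n) H) {m ρ δ : ℝ} :
    SymbolClass m ρ δ (curry (H 0)) ↔ ∀ α β, H (Sum.elim β α) =O[⊤]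
      phaseWeight ((m - ρ * mOrd α + δ * mOrd β) / 2) := by
  refine (and_iff_right (hH.contDiff 0)).trans (forall₂_congr fun α β => ?_)
  simp only [hH.mixedD_eq, isBigO_iff', Filter.eventually_top, Prod.forall, norm_phaseWeight]
  rfl

theorem SymbolClass.exists_isDerivFamily {m ρ δ : ℝ} {σ : (Fin n → ℝ) → (Fin n → ℝ) → ℂ}
    (hσ : SymbolClass m ρ δ σ) :
    ∃ H, IsDerivFamily (phaseBasis n) H ∧ H 0 = uncurry σ ∧ ∀ α β, H (Sum.elim β α) =O[⊤]
      phaseWeight ((m - ρ * mOrd α + δ * mOrd β) / 2) := by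
  obtain ⟨H, hH, hH0⟩ := exists_isDerivFamily_of_contDiff (phaseBasis n) hσ.1
  have hσH : curry (H 0) = σ := by rw [hH0]; rfl
  exact ⟨H, hH, hH0, hH.symbolClass_iff.1 (hσH ▸ hσ)⟩

theorem SymbolClass.exists_isBigO {m ρ δ : ℝ} {σ : (Fin n → ℝ) → (Fin n → ℝ) → ℂ}
    (hσ : SymbolClass m ρ δ σ) : ∃ s, uncurry σ =O[⊤] phaseWeight s := by
  obtain ⟨H, -, hH0, hbound⟩ := hσ.exists_isDerivFamily
  have hσ_bound := hbound 0 0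
  rw [Sum.elim_zero_zero, hH0] at hσ_bound
  exact ⟨_, hσ_bound⟩

section KernelConvolution

variable {E F F' : Type*} [NormedAddCommGroup E] [NormedSpace ℝ E] [NormedAddCommGroup F]
  [NormedSpace ℝ F] [NormedAddCommGroup F'] [NormedSpace ℝ F']
  {k : (Fin n → ℝ) × (Fin n → ℝ) → E} {μ : Measure ((Fin n → ℝ) × (Fin n → ℝ))}

theorem integrable_peetreWeight_smul {s : ℝ}
    (hk : Integrable (fun t => phaseWeight |s| t • k t) μ) :
    Integrable (fun t => peetreWeight s t • k t) μ := by
  simp only [peetreWeight, mul_smul]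
  exact hk.smul ((2 : ℝ) ^ |s|)

theorem isBigO_convolution_phaseWeight {s : ℝ}
    (hk : Integrable (fun t => phaseWeight |s| t • k t) μ)
    {G : (Fin n → ℝ) × (Fin n → ℝ) → F} (hG : G =O[⊤] phaseWeight s)
    (L : E →L[ℝ] F →L[ℝ] F') : (k ⋆[L, μ] G) =O[⊤] phaseWeight s :=
  (isModerate_phaseWeight s).isBigO_convolution (integrable_peetreWeight_smul hk) hG L

variable {H : (Fin n ⊕ Fin n → ℕ) → (Fin n → ℝ) × (Fin n → ℝ) → F}

theorem IsDerivFamily.exists_isBigO_phaseWeight (hH : IsDerivFamily (phaseBasis n) H)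
    (hgrowth : ∀ γ, ∃ s, H γ =O[⊤] phaseWeight s) (γ : Fin n ⊕ Fin n → ℕ) :
    ∃ s, H γ =O[⊤] phaseWeight s ∧ fderiv ℝ (H γ) =O[⊤] phaseWeight s := by
  choose s hs using hgrowth
  obtain ⟨M, hM⟩ := (Set.finite_range fun i => s (γ + Pi.single i 1)).bddAbove
  refine ⟨max (s γ) M, (hs γ).trans (phaseWeight_isBigO (le_max_left _ _)),
    hH.isBigO_fderiv fun i => (hs _).trans (phaseWeight_isBigO ?_)⟩
  exact (hM ⟨i, rfl⟩).trans (le_max_right _ _)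

theorem IsDerivFamily.convolution (hH : IsDerivFamily (phaseBasis n) H)
    (hgrowth : ∀ γ, ∃ s, H γ =O[⊤] phaseWeight s)
    (hk : ∀ s, Integrable (fun t => phaseWeight s t • k t) μ) (L : E →L[ℝ] F →L[ℝ] F') :
    IsDerivFamily (phaseBasis n) fun γ => k ⋆[L, μ] H γ := by
  choose s hs hs' using hH.exists_isBigO_phaseWeight hgrowth
  have hk_meas : AEStronglyMeasurable k μ := by
    simpa [phaseWeight] using (hk 0).aestronglyMeasurable
  have hk_weighted (γ) : Integrable (fun t => peetreWeight (s γ) t • k t) μ :=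
    integrable_peetreWeight_smul (hk |s γ|)
  have hH1 (γ) : ContDiff ℝ 1 (H γ) := (hH.contDiff γ).of_le (by simp)
  refine ⟨fun γ p => ?_, fun γ i p => ?_⟩
  · exact ((isModerate_phaseWeight (s γ)).hasFDerivAt_convolution (continuous_phaseWeight _)
      hk_meas (hk_weighted γ) (hH1 γ) (hs γ) (hs' γ) L p).differentiableAt
  · rw [(isModerate_phaseWeight (s γ)).fderiv_convolution_apply (continuous_phaseWeight _)
      hk_meas (hk_weighted γ) (hH1 γ) (hs γ) (hs' γ)]
    simp only [hH.fderiv_apply]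

theorem SymbolClass.convolution {m ρ δ : ℝ} {σ : (Fin n → ℝ) → (Fin n → ℝ) → ℂ}
    (hσ : SymbolClass m ρ δ σ) (hk : ∀ s, Integrable (fun t => phaseWeight s t • k t) μ)
    (L : E →L[ℝ] ℂ →L[ℝ] ℂ) : SymbolClass m ρ δ (curry (k ⋆[L, μ] uncurry σ)) := by
  obtain ⟨H, hH, hH0, hbound⟩ := hσ.exists_isDerivFamily
  have hgrowth (γ) : ∃ s, H γ =O[⊤] phaseWeight s :=
    ⟨_, Sum.elim_comp_inl_inr γ ▸ hbound (γ ∘ Sum.inr) (γ ∘ Sum.inl)⟩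
  rw [← hH0]
  exact (hH.convolution hgrowth hk L).symbolClass_iff.2 fun α β =>
    isBigO_convolution_phaseWeight (hk _) (hbound α β) L

end KernelConvolution

/-! ### Fourier analysis on `ℝⁿ` with the dot product -/

open scoped FourierTransform SchwartzMap

theorem expi_eq_fourierChar (t : ℝ) : expi t = Real.fourierChar t := by
  rw [Real.fourierChar_apply, expi]
  congr 1
  push_cast
  ring

theorem norm_expi (t : ℝ) : ‖expi t‖ = 1 := by
  rw [expi_eq_fourierChar, Circle.norm_coe]

theorem expi_add (s t : ℝ) : expi (s + t) = expi s * expi t := by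
  simp only [expi_eq_fourierChar, AddChar.map_add_eq_mul, Circle.coe_mul]

@[fun_prop]
theorem continuous_expi : Continuous expi := by
  unfold expi; fun_prop

@[fun_prop]
theorem continuous_dotp {X : Type*} [TopologicalSpace X] {f g : X → Fin n → ℝ}
    (hf : Continuous f) (hg : Continuous g) : Continuous fun x => dotp (f x) (g x) := by
  unfold dotp; fun_prop

theorem FT_eq_fourierIntegral (f : (Fin n → ℝ) → ℂ) :
    FT f = VectorFourier.fourierIntegral Real.fourierChar volume (dotProductBilin ℝ ℝ) f := by
  funext ξ
  refine integral_congr_ae (.of_forall fun y => ?_)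
  simp only [expi_eq_fourierChar, Circle.smul_def, smul_eq_mul, mul_comm (f y)]
  rfl

theorem FT_eq_fourier (f : (Fin n → ℝ) → ℂ) (ξ : Fin n → ℝ) :
    FT f ξ = 𝓕 (fun x : EuclideanSpace ℝ (Fin n) => f x.ofLp) (WithLp.toLp 2 ξ) := by
  rw [Real.fourier_eq, ← (PiLp.volume_preserving_toLp (Fin n)).integral_comp
    (MeasurableEquiv.toLp 2 (Fin n → ℝ)).measurableEmbedding]
  refine integral_congr_ae (.of_forall fun y => ?_)
  simp [expi_eq_fourierChar, Circle.smul_def, PiLp.inner_apply, dotp, mul_comm]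

/-- The Fourier transform of a Schwartz function on `Fin n → ℝ`, as a Schwartz function. Mathlib's
transform lives on inner product spaces, so it is transported from `EuclideanSpace`. -/
def schwartzFT (f : 𝓢(Fin n → ℝ, ℂ)) : 𝓢(Fin n → ℝ, ℂ) :=
  let e := EuclideanSpace.equiv (Fin n) ℝ
  SchwartzMap.compCLMOfContinuousLinearEquiv ℂ e.symm
    (𝓕 (SchwartzMap.compCLMOfContinuousLinearEquiv ℂ e f))

theorem coe_schwartzFT (f : 𝓢(Fin n → ℝ, ℂ)) : ⇑(schwartzFT f) = FT f :=
  funext fun ξ => (FT_eq_fourier f ξ).symm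

theorem FT_FT_neg (f : 𝓢(Fin n → ℝ, ℂ)) : FT (fun η => FT f (-η)) = f := by
  let g := SchwartzMap.compCLMOfContinuousLinearEquiv ℂ (EuclideanSpace.equiv (Fin n) ℝ) f
  funext y
  have inversion : 𝓕⁻ (𝓕 (g : EuclideanSpace ℝ (Fin n) → ℂ)) (WithLp.toLp 2 y) = f y := by
    rw [← SchwartzMap.fourier_coe, ← SchwartzMap.fourierInv_coe,
      FourierTransform.fourierInv_fourier_eq]
    rfl
  have FT_neg : (fun η : EuclideanSpace ℝ (Fin n) => FT f (-η.ofLp)) =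
      fun η => 𝓕 (g : EuclideanSpace ℝ (Fin n) → ℂ) (-η) :=
    funext fun η => FT_eq_fourier f (-η.ofLp)
  rw [← inversion, Real.fourierInv_eq_fourier_comp_neg, FT_eq_fourier, FT_neg]

theorem integral_FT_mul {f g : (Fin n → ℝ) → ℂ} (hf : Integrable f) (hg : Integrable g) :
    ∫ ξ, FT f ξ * g ξ = ∫ x, f x * FT g x := by
  have hflip : (dotProductBilin ℝ ℝ : (Fin n → ℝ) →ₗ[ℝ] (Fin n → ℝ) →ₗ[ℝ] ℝ).flip =
      dotProductBilin ℝ ℝ := by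
    ext; simp [Pi.single_comm]
  have := VectorFourier.integral_fourierIntegral_smul_eq_flip (L := dotProductBilin ℝ ℝ)
    Real.continuous_fourierChar (continuous_dotp continuous_fst continuous_snd) hf hg
  simpa only [hflip, ← FT_eq_fourierIntegral, smul_eq_mul] using this

theorem integrable_wt_rpow_smul (f : 𝓢(Fin n → ℝ, ℂ)) (s : ℝ) :
    Integrable fun ξ => wt ξ ^ s • f ξ := by
  have wt_eq (ξ : Fin n → ℝ) : wt ξ = 1 + ‖(EuclideanSpace.equiv (Fin n) ℝ).symm ξ‖ ^ 2 := by
    simp [wt, EuclideanSpace.real_norm_sq_eq]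
  have htemp : (fun ξ : Fin n → ℝ => wt ξ ^ s).HasTemperateGrowth := by
    simp only [wt_eq]
    exact (hasTemperateGrowth_one_add_norm_sq_rpow _ s).comp
      (EuclideanSpace.equiv (Fin n) ℝ).symm.hasTemperateGrowth
  exact (SchwartzMap.smulLeftCLM ℂ (fun ξ : Fin n → ℝ => wt ξ ^ s) f).integrable.congr
    (.of_forall fun ξ => SchwartzMap.smulLeftCLM_apply_apply htemp f ξ)

/-! ### The Wick quantization -/

/-- The function on phase space whose convolution with a Wick symbol is its Kohn–Nirenberg
symbol. -/
def wickKernel (a : (Fin n → ℝ) → ℂ) (t : (Fin n → ℝ) × (Fin n → ℝ)) : ℂ :=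
  expi (-(dotp t.1 t.2)) * FT a (-t.2) * starRingEnd ℂ (a t.1)

/-- The Kohn–Nirenberg symbol of the Wick quantization of `σ` with window `a`. -/
def wickSymbol (a : (Fin n → ℝ) → ℂ) (σ : (Fin n → ℝ) → (Fin n → ℝ) → ℂ) :
    (Fin n → ℝ) → (Fin n → ℝ) → ℂ :=
  curry (wickKernel a ⋆[ContinuousLinearMap.mul ℝ ℂ] uncurry σ)

/-- The common double integrand of `WickOp a σ f y` and `OpKN (wickSymbol a σ) f y`, in the
frequency `η` of `f` and the phase space point `p` at which `σ` is evaluated. -/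
def wickIntegrand (a : (Fin n → ℝ) → ℂ) (σ : (Fin n → ℝ) → (Fin n → ℝ) → ℂ)
    (f : (Fin n → ℝ) → ℂ) (y η : Fin n → ℝ) (p : (Fin n → ℝ) × (Fin n → ℝ)) : ℂ :=
  expi (dotp y η) * (wickKernel a ((y, η) - p) * uncurry σ p) * FT f η

theorem continuous_FT (f : 𝓢(Fin n → ℝ, ℂ)) : Continuous (FT f) :=
  coe_schwartzFT f ▸ (schwartzFT f).continuous

theorem continuous_wickKernel (a : 𝓢(Fin n → ℝ, ℂ)) : Continuous (wickKernel a) := by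
  have := continuous_FT a
  unfold wickKernel
  fun_prop

theorem integrable_phaseWeight_smul_wickKernel (a : 𝓢(Fin n → ℝ, ℂ)) (s : ℝ) :
    Integrable fun t => phaseWeight s t • wickKernel a t := by
  have hFT : Integrable fun η => wt η ^ s • FT a (-η) := by
    simpa [wt, coe_schwartzFT] using (integrable_wt_rpow_smul (schwartzFT a) s).comp_neg
  refine ((a.integrable (μ := volume)).mul_prod hFT).congr' ?_ (.of_forall fun t => ?_)
  · exact ((continuous_phaseWeight s).smul (continuous_wickKernel a)).aestronglyMeasurable
  · simp only [wickKernel, phaseWeight, norm_smul, norm_mul, norm_expi, RCLike.norm_conj]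
    ring

theorem FT_translate_modulate (a : (Fin n → ℝ) → ℂ) (x ξ η : Fin n → ℝ) :
    FT (fun z => a (z - x) * expi (-(dotp z ξ))) η =
      expi (-(dotp x (ξ + η))) * FT a (ξ + η) := by
  simp only [FT]
  rw [← integral_add_right_eq_self _ x, ← integral_const_mul]
  refine integral_congr_ae (.of_forall fun z => ?_)
  have phase : expi (-(dotp (z + x) ξ)) * expi (-(dotp (z + x) η)) =
      expi (-(dotp x (ξ + η))) * expi (-(dotp z (ξ + η))) := by
    simp only [← expi_add, dotp, Pi.add_apply, add_mul, mul_add, Finset.sum_add_distrib]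
    ring_nf
  simp only [add_sub_cancel_right]
  linear_combination a z * phase

theorem Barg_eq_integral_FT (a f : 𝓢(Fin n → ℝ, ℂ)) (x ξ : Fin n → ℝ) :
    Barg a f x ξ = ∫ η, FT f η * (expi (-(dotp x (ξ - η))) * FT a (ξ - η)) := by
  have hFTf : Integrable fun η => FT f (-η) := by
    simpa only [coe_schwartzFT] using (schwartzFT f).integrable.comp_neg
  have hwin : Integrable fun z => a (z - x) * expi (-(dotp z ξ)) :=
    (a.integrable.comp_sub_right x).mul_bdd (c := 1)
      (Continuous.aestronglyMeasurable (by fun_prop)) (.of_forall fun z => (norm_expi _).le)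
  calc Barg a f x ξ
      = ∫ z, FT (fun η => FT f (-η)) z * (a (z - x) * expi (-(dotp z ξ))) := by
        simp only [Barg, FT_FT_neg, mul_assoc]
    _ = ∫ η, FT f (-η) * (expi (-(dotp x (ξ + η))) * FT a (ξ + η)) := by
        simp only [integral_FT_mul hFTf hwin, FT_translate_modulate]
    _ = ∫ η, FT f η * (expi (-(dotp x (ξ - η))) * FT a (ξ - η)) := by
        rw [← integral_neg_eq_self]
        simp only [neg_neg, sub_eq_add_neg]

theorem WickOp_eq_integral_wickIntegrand (a f : 𝓢(Fin n → ℝ, ℂ))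
    (σ : (Fin n → ℝ) → (Fin n → ℝ) → ℂ) (y : Fin n → ℝ) :
    WickOp a σ f y = ∫ p, ∫ η, wickIntegrand a σ f y η p := by
  refine integral_congr_ae (.of_forall fun ⟨x, ξ⟩ => ?_)
  simp only [Barg_eq_integral_FT, ← integral_const_mul, ← integral_mul_const]
  refine integral_congr_ae (.of_forall fun η => ?_)
  have phase : expi (-(dotp x (ξ - η))) * expi (dotp y ξ) =
      expi (dotp y η) * expi (-(dotp (y - x) (η - ξ))) := by
    simp only [← expi_add, dotp, Pi.sub_apply, sub_mul, mul_sub, Finset.sum_sub_distrib]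
    ring_nf
  simp only [wickIntegrand, wickKernel, Prod.mk_sub_mk, neg_sub, uncurry_apply_pair]
  linear_combination (σ x ξ * FT f η * FT a (ξ - η) * starRingEnd ℂ (a (y - x))) * phase

instance isAddHaarMeasure_volume_phaseSpace :
    (volume : Measure ((Fin n → ℝ) × (Fin n → ℝ))).IsAddHaarMeasure :=
  Measure.prod.instIsAddHaarMeasure _ _

instance isNegInvariant_volume_phaseSpace :
    (volume : Measure ((Fin n → ℝ) × (Fin n → ℝ))).IsNegInvariant :=
  Measure.IsAddHaarMeasure.isNegInvariant_of_innerRegular _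

theorem OpKN_wickSymbol_eq_integral_wickIntegrand (a f : (Fin n → ℝ) → ℂ)
    (σ : (Fin n → ℝ) → (Fin n → ℝ) → ℂ) (y : Fin n → ℝ) :
    OpKN (wickSymbol a σ) f y = ∫ η, ∫ p, wickIntegrand a σ f y η p := by
  simp only [OpKN, wickSymbol, curry_apply, convolution_eq_swap, ContinuousLinearMap.mul_apply',
    wickIntegrand, integral_const_mul, integral_mul_const]

theorem integrable_wickIntegrand (a f : 𝓢(Fin n → ℝ, ℂ))
    {σ : (Fin n → ℝ) → (Fin n → ℝ) → ℂ} (hσc : Continuous (uncurry σ)) {s : ℝ}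
    (hσ : uncurry σ =O[⊤] phaseWeight s) (y : Fin n → ℝ) :
    Integrable (uncurry (wickIntegrand a σ f y)) := by
  obtain ⟨C, hC, hσC⟩ := hσ.exists_nonneg
  have hFT : Integrable fun η => ‖wt η ^ s • FT f η‖ := by
    simpa only [coe_schwartzFT] using (integrable_wt_rpow_smul (schwartzFT f) s).norm
  have hk := (integrable_peetreWeight_smul (integrable_phaseWeight_smul_wickKernel a |s|)).norm
  have bound_integrable :=
    (integrable_mul_comp_sub hFT hk (u := fun η => (y, η)) (by fun_prop)).const_mul C
  refine bound_integrable.mono' ?_ (.of_forall fun ⟨η, p⟩ => ?_)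
  · have := continuous_wickKernel a
    have := continuous_FT f
    refine Continuous.aestronglyMeasurable ?_
    unfold wickIntegrand uncurry
    fun_prop
  · have kernel_bound : ‖wickKernel a ((y, η) - p) * uncurry σ p‖ ≤
        C * ‖wt η ^ s‖ * ‖peetreWeight s ((y, η) - p) • wickKernel a ((y, η) - p)‖ := by
      simpa [phaseWeight] using (isModerate_phaseWeight s).norm_convolution_integrand_le
        (k := wickKernel a) hC hσC (ContinuousLinearMap.mul ℝ ℂ) (y, η) ((y, η) - p)
    calc ‖wickIntegrand a σ f y η p‖
        = ‖wickKernel a ((y, η) - p) * uncurry σ p‖ * ‖FT f η‖ := by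
          rw [wickIntegrand, norm_mul, norm_mul, norm_expi, one_mul]
      _ ≤ C * ‖wt η ^ s‖ * ‖peetreWeight s ((y, η) - p) • wickKernel a ((y, η) - p)‖ *
            ‖FT f η‖ := mul_le_mul_of_nonneg_right kernel_bound (norm_nonneg _)
      _ = C * (‖wt η ^ s • FT f η‖ *
            ‖peetreWeight s ((y, η) - p) • wickKernel a ((y, η) - p)‖) := by
          rw [norm_smul (wt η ^ s)]; ring

theorem WickOp_eq_OpKN_wickSymbol (a f : 𝓢(Fin n → ℝ, ℂ))
    {σ : (Fin n → ℝ) → (Fin n → ℝ) → ℂ} (hσc : Continuous (uncurry σ)) {s : ℝ}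
    (hσ : uncurry σ =O[⊤] phaseWeight s) (y : Fin n → ℝ) :
    WickOp a σ f y = OpKN (wickSymbol a σ) f y := by
  rw [WickOp_eq_integral_wickIntegrand, OpKN_wickSymbol_eq_integral_wickIntegrand,
    integral_integral_swap (integrable_wickIntegrand a f hσc hσ y)]

end

theorem wick_is_KN_general {n : ℕ} {m ρ δ : ℝ} (a : SchwartzMap (Fin n → ℝ) ℂ)
    {σ : (Fin n → ℝ) → (Fin n → ℝ) → ℂ} (hσ : SymbolClass m ρ δ σ) :
    ∃ τ : (Fin n → ℝ) → (Fin n → ℝ) → ℂ, SymbolClass m ρ δ τ ∧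
      ∀ (f : SchwartzMap (Fin n → ℝ) ℂ) (x : Fin n → ℝ), WickOp a σ f x = OpKN τ f x := by
  obtain ⟨s, hs⟩ := hσ.exists_isBigO
  exact ⟨wickSymbol a σ, hσ.convolution (integrable_phaseWeight_smul_wickKernel a) _,
    fun f => WickOp_eq_OpKN_wickSymbol a f hσ.1.continuous hs⟩

/-- the Wick quantization of a symbol of order `m ≤ 0` is a
Kohn–Nirenberg pseudodifferential operator of order `m`. -/
theorem wick_is_KN (n : ℕ) (hn : 1 ≤ n)
    (m ρ δ : ℝ) (hm : m ≤ 0) (hρ : ρ ≤ 1) (hδρ : δ ≤ ρ) (hδ0 : 0 ≤ δ) (hδ1 : δ < 1)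
    (a : SchwartzMap (Fin n → ℝ) ℂ) (ha : (∫ y, ‖a y‖ ^ 2) = 1)
    (σ : (Fin n → ℝ) → (Fin n → ℝ) → ℂ) (hσ : SymbolClass m ρ δ σ) :
    ∃ τ : (Fin n → ℝ) → (Fin n → ℝ) → ℂ, SymbolClass m ρ δ τ ∧
      ∀ (f : SchwartzMap (Fin n → ℝ) ℂ) (x : Fin n → ℝ),
        WickOp (⇑a) σ (⇑f) x = ∫ ξ, expi (dotp x ξ) * τ x ξ * FT (⇑f) ξ := by
  exact wick_is_KN_general a hσ
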